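/- Let c ∈ ℂ. The family of functions l_c^{(k)}(x) = (1/k!)∂^k/∂c'^k|_{c'=c} Γ(x)/Γ(x−c'), for k ∈ ℕ, is linearly independent over the field of meromorphic functions that are quotients of convergent factorial series. More precisely, any relation Σ_{k=0}^n a_k l_c^{(k)} = 0 with coefficients a_k quotients of convergent factorial series forces all a_k = 0. -/

import Mathlib

/-- `f` is (on a right half-plane) the sum of a convergent factorial series. -/
def IsFactorialSeries (f : ℂ → ℂ) : Prop :=
  ∃ (a : ℕ → ℂ) (R : ℝ), ∀ x : ℂ, R < x.re →
    HasSum (fun s : ℕ => a s * (∏ k ∈ Finset.range s, (x + (k : ℂ)))⁻¹) (f x)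

/-- `f` is (for large real `x`) a quotient of two convergent factorial series. -/
def IsFactorialQuotient (f : ℂ → ℂ) : Prop :=
  ∃ u v : ℂ → ℂ, IsFactorialSeries u ∧ IsFactorialSeries v ∧
    ∃ R : ℝ, ∀ x : ℝ, R < x → v x ≠ 0 ∧ f x = u x / v x

/-!
The function `x ^ (-z) * Γ(x) / Γ(x - z)` tends to `1` as `x → +∞`, locally uniformly in `z`: for
`z.re < -1` this is dominated convergence in Euler's integral for `Γ(-z - 1)`, and the functional
equation of `Γ` carries it to all `z`. By Weierstrass' theorem its `z`-derivatives of positive order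
tend to `0`, so that the Leibniz rule gives `l_c^{(k)}(x) ~ x ^ c * (log x) ^ k / k!`. A quotient of
factorial series either vanishes for large `x` or is equivalent to some `b * x ^ α` with `b ≠ 0`.
Hence among the nonzero terms of a relation the one with the lexicographically largest `(α_k, k)`
dominates all the others, and the sum cannot vanish.
-/

open Filter Topology Asymptotics MeasureTheory Set

lemma isEquivalent_const_mul_of_tendsto_div {ι 𝕜 : Type*} [NormedField 𝕜] {l : Filter ι}
    {f g : ι → 𝕜} {C : 𝕜} (hC : C ≠ 0) (hg : ∀ᶠ x in l, g x ≠ 0)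
    (h : Tendsto (fun x ↦ f x / g x) l (𝓝 C)) : f ~[l] fun x ↦ C * g x := by
  refine (((isEquivalent_const_iff_tendsto hC).2 h).mul IsEquivalent.refl).congr_left ?_
  filter_upwards [hg] with x hx
  exact div_mul_cancel₀ _ hx

lemma tendstoLocallyUniformlyOn_iteratedDeriv {ι : Type*} {φ : Filter ι} {F : ι → ℂ → ℂ}
    {f : ℂ → ℂ} {U : Set ℂ} (hU : IsOpen U) (hF : ∀ᶠ i in φ, DifferentiableOn ℂ (F i) U)
    (h : TendstoLocallyUniformlyOn F f φ U) (k : ℕ) :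
    TendstoLocallyUniformlyOn (fun i ↦ iteratedDeriv k (F i)) (iteratedDeriv k f) φ U := by
  induction k generalizing F f with
  | zero => simpa only [iteratedDeriv_zero] using h
  | succ k ih =>
    simp only [iteratedDeriv_succ']
    exact ih (hF.mono fun i hi ↦ hi.deriv hU) (h.deriv hF hU)

/-- Euler's approximation `(1 - u / x) ^ x * u ^ (s - 1)` on `(0, x]` of the integrand
`exp (-u) * u ^ (s - 1)` of `Γ(s)`, extended by zero. -/
noncomputable def eulerIntegrand (x : ℝ) (s : ℂ) : ℝ → ℂ :=
  (Ioc 0 x).indicator fun u ↦ ((1 - u / x) ^ x : ℝ) * (u : ℂ) ^ (s - 1)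

lemma measurable_eulerIntegrand (x : ℝ) (s : ℂ) : Measurable (eulerIntegrand x s) := by
  unfold eulerIntegrand
  exact Measurable.indicator (by fun_prop) measurableSet_Ioc

lemma norm_eulerIntegrand_le (x : ℝ) (s : ℂ) {u : ℝ} (hu : 0 < u) :
    ‖eulerIntegrand x s u‖ ≤ Real.exp (-u) * u ^ (s.re - 1) := by
  by_cases hux : u ∈ Ioc 0 x
  · have hx : 0 < x := hu.trans_le hux.2
    have hbase : 0 ≤ 1 - u / x := sub_nonneg.2 (div_le_one_of_le₀ hux.2 hx.le)
    have hexp : (1 - u / x) ^ x ≤ Real.exp (-u) := by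
      calc (1 - u / x) ^ x ≤ Real.exp (-(u / x)) ^ x :=
            Real.rpow_le_rpow hbase (Real.one_sub_le_exp_neg _) hx.le
        _ = Real.exp (-u) := by rw [← Real.exp_mul, neg_mul, div_mul_cancel₀ _ hx.ne']
    rw [eulerIntegrand, indicator_of_mem hux, norm_mul,
      Complex.norm_of_nonneg (Real.rpow_nonneg hbase x), Complex.norm_cpow_eq_rpow_re_of_pos hu,
      Complex.sub_re, Complex.one_re]
    gcongr
  · rw [eulerIntegrand, indicator_of_notMem hux, norm_zero]
    positivity

lemma tendsto_eulerIntegrand {u : ℝ} (hu : 0 < u) (s : ℂ) :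
    Tendsto (fun p : ℝ × ℂ ↦ eulerIntegrand p.1 p.2 u) (atTop ×ˢ 𝓝 s)
      (𝓝 (Real.exp (-u) * (u : ℂ) ^ (s - 1))) := by
  have hexp : Tendsto (fun x : ℝ ↦ (((1 - u / x) ^ x : ℝ) : ℂ)) atTop (𝓝 (Real.exp (-u))) := by
    refine (Complex.continuous_ofReal.tendsto _).comp ?_
    simpa only [neg_div, ← sub_eq_add_neg] using Real.tendsto_one_add_div_rpow_exp (-u)
  have hcpow : Tendsto (fun z : ℂ ↦ (u : ℂ) ^ (z - 1)) (𝓝 s) (𝓝 ((u : ℂ) ^ (s - 1))) :=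
    ((continuous_id.sub continuous_const).const_cpow
      (Or.inl (Complex.ofReal_ne_zero.2 hu.ne'))).tendsto s
  refine ((hexp.comp tendsto_fst).mul (hcpow.comp tendsto_snd)).congr' ?_
  filter_upwards [tendsto_fst.eventually (eventually_ge_atTop u)] with p hp
  rw [eulerIntegrand, indicator_of_mem (mem_Ioc.2 ⟨hu, hp⟩)]
  rfl

lemma tendsto_integral_eulerIntegrand {s : ℂ} (hs : 0 < s.re) :
    Tendsto (fun p : ℝ × ℂ ↦ ∫ u in Ioi 0, eulerIntegrand p.1 p.2 u) (atTop ×ˢ 𝓝 s)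
      (𝓝 (Complex.Gamma s)) := by
  have hlower : s.re / 2 < s.re := half_lt_self hs
  have hupper : s.re < s.re + 1 := lt_add_one _
  rw [Complex.Gamma_eq_integral hs]
  refine tendsto_integral_filter_of_dominated_convergence
    (fun u ↦ Real.exp (-u) * u ^ (s.re / 2 - 1) + Real.exp (-u) * u ^ (s.re + 1 - 1))
    (.of_forall fun p ↦ (measurable_eulerIntegrand p.1 p.2).aestronglyMeasurable) ?_
    ((Real.GammaIntegral_convergent (half_pos hs)).add
      (Real.GammaIntegral_convergent (by linarith)))
    ((ae_restrict_iff' measurableSet_Ioi).2 (.of_forall fun u hu ↦ tendsto_eulerIntegrand hu s))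
  have hstrip : ∀ᶠ z : ℂ in 𝓝 s, s.re / 2 < z.re ∧ z.re < s.re + 1 :=
    Complex.continuous_re.continuousAt.eventually (Ioo_mem_nhds hlower hupper)
  filter_upwards [tendsto_snd.eventually hstrip] with p hp
  refine (ae_restrict_iff' measurableSet_Ioi).2 (.of_forall fun u (hu : 0 < u) ↦ ?_)
  refine (norm_eulerIntegrand_le p.1 p.2 hu).trans ?_
  rw [← mul_add]
  gcongr
  rcases le_total u 1 with hu1 | hu1
  · exact (Real.rpow_le_rpow_of_exponent_ge hu hu1 (by linarith [hp.1])).trans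
      (le_add_of_nonneg_right (by positivity))
  · exact (Real.rpow_le_rpow_of_exponent_le hu1 (by linarith [hp.2])).trans
      (le_add_of_nonneg_left (by positivity))

lemma integral_eulerIntegrand {x : ℝ} (hx : 0 < x) (s : ℂ) :
    ∫ u in Ioi 0, eulerIntegrand x s u = (x : ℂ) ^ s * Complex.betaIntegral s (x + 1) := by
  have hx' : (x : ℂ) ≠ 0 := Complex.ofReal_ne_zero.2 hx.ne'
  have hintegrand : ∀ u ∈ Ioc 0 x, (u : ℂ) ^ (s - 1) * ((x : ℂ) - u) ^ ((x : ℂ) + 1 - 1) =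
      (x : ℂ) ^ (x : ℂ) * (((1 - u / x) ^ x : ℝ) * (u : ℂ) ^ (s - 1)) := fun u hu ↦ by
    have hbase : 0 ≤ 1 - u / x := sub_nonneg.2 (div_le_one_of_le₀ hu.2 hx.le)
    rw [add_sub_cancel_right, Complex.ofReal_cpow hbase, ← mul_assoc,
      ← Complex.mul_cpow_ofReal_nonneg hx.le hbase, ← Complex.ofReal_mul, mul_sub, mul_one,
      mul_div_cancel₀ _ hx.ne', Complex.ofReal_sub, mul_comm]
  have hscaled := Complex.betaIntegral_scaled s (x + 1) hx
  rw [intervalIntegral.integral_of_le hx.le, setIntegral_congr_fun measurableSet_Ioc hintegrand,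
    integral_const_mul, show s + ((x : ℂ) + 1) - 1 = x + s by ring, Complex.cpow_add _ _ hx',
    mul_assoc] at hscaled
  unfold eulerIntegrand
  rw [setIntegral_indicator measurableSet_Ioc, inter_eq_right.2 Ioc_subset_Ioi_self]
  exact mul_left_cancel₀ (Complex.cpow_ne_zero_iff.2 (Or.inl hx')) hscaled

/-- The quotient `Γ(x) / Γ(x - z)` divided by its leading behaviour `x ^ z`. -/
noncomputable def normalizedGammaQuotient (x : ℝ) (z : ℂ) : ℂ :=
  (x : ℂ) ^ (-z) * (Complex.Gamma x / Complex.Gamma (x - z))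

lemma differentiable_normalizedGammaQuotient {x : ℝ} (hx : 0 < x) :
    Differentiable ℂ (normalizedGammaQuotient x) := by
  have hcpow : Differentiable ℂ fun z : ℂ ↦ (x : ℂ) ^ (-z) :=
    differentiable_id.neg.const_cpow (Or.inl (Complex.ofReal_ne_zero.2 hx.ne'))
  have hGamma : Differentiable ℂ fun z : ℂ ↦ (Complex.Gamma (x - z))⁻¹ :=
    Complex.differentiable_one_div_Gamma.comp (differentiable_id.const_sub (x : ℂ))
  exact hcpow.mul (hGamma.const_mul _)

lemma normalizedGammaQuotient_add_one {x : ℝ} (hx : 0 < x) (z : ℂ) :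
    normalizedGammaQuotient x (z + 1) = normalizedGammaQuotient x z * (1 - (z + 1) / x) := by
  have hx' : (x : ℂ) ≠ 0 := Complex.ofReal_ne_zero.2 hx.ne'
  have hGamma := Complex.one_div_Gamma_eq_self_mul_one_div_Gamma_add_one ((x : ℂ) - (z + 1))
  rw [show (x : ℂ) - (z + 1) + 1 = x - z by ring] at hGamma
  rw [normalizedGammaQuotient, normalizedGammaQuotient, div_eq_mul_inv, hGamma, neg_add,
    Complex.cpow_add _ _ hx', Complex.cpow_neg_one]
  field_simp

lemma normalizedGammaQuotient_neg_sub_one {x : ℝ} (hx : 0 < x) {s : ℂ} (hs : 0 < s.re) :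
    normalizedGammaQuotient x (-s - 1) =
      (x : ℂ) ^ s * Complex.betaIntegral s (x + 1) / Complex.Gamma s := by
  have hx' : (x : ℂ) ≠ 0 := Complex.ofReal_ne_zero.2 hx.ne'
  have hre : 0 < ((x : ℂ) + 1).re := by simpa using by linarith
  have hbeta := Complex.Gamma_mul_Gamma_eq_betaIntegral hs hre
  have hs0 : Complex.Gamma s ≠ 0 := Complex.Gamma_ne_zero_of_re_pos hs
  have hsum0 : Complex.Gamma (s + (x + 1)) ≠ 0 :=
    Complex.Gamma_ne_zero_of_re_pos (by simpa using by linarith)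
  rw [Complex.Gamma_add_one _ hx'] at hbeta
  rw [normalizedGammaQuotient, show (x : ℂ) - (-s - 1) = s + (x + 1) by ring,
    show -(-s - 1) = s + 1 by ring, Complex.cpow_add _ _ hx', Complex.cpow_one]
  field_simp
  linear_combination (x : ℂ) ^ s * hbeta

lemma tendsto_normalizedGammaQuotient_neg_sub_one {s : ℂ} (hs : 0 < s.re) :
    Tendsto (fun p : ℝ × ℂ ↦ normalizedGammaQuotient p.1 (-p.2 - 1)) (atTop ×ˢ 𝓝 s) (𝓝 1) := by
  have hs0 : Complex.Gamma s ≠ 0 := Complex.Gamma_ne_zero_of_re_pos hs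
  have hGamma : Tendsto (fun p : ℝ × ℂ ↦ (Complex.Gamma p.2)⁻¹) (atTop ×ˢ 𝓝 s)
      (𝓝 (Complex.Gamma s)⁻¹) :=
    (Complex.differentiable_one_div_Gamma.continuous.tendsto s).comp tendsto_snd
  have hquot := (tendsto_integral_eulerIntegrand hs).mul hGamma
  rw [mul_inv_cancel₀ hs0] at hquot
  have hre : ∀ᶠ w : ℂ in 𝓝 s, 0 < w.re :=
    Complex.continuous_re.continuousAt.eventually (lt_mem_nhds hs)
  refine hquot.congr' ?_
  filter_upwards [tendsto_fst.eventually (eventually_gt_atTop 0), tendsto_snd.eventually hre]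
    with p hx hw
  rw [normalizedGammaQuotient_neg_sub_one hx hw, integral_eulerIntegrand hx, div_eq_mul_inv]

lemma tendsto_normalizedGammaQuotient (z : ℂ) :
    Tendsto (fun p : ℝ × ℂ ↦ normalizedGammaQuotient p.1 p.2) (atTop ×ˢ 𝓝 z) (𝓝 1) := by
  obtain ⟨m, hm⟩ := exists_nat_gt (z.re + 1)
  induction m generalizing z with
  | zero =>
    have hs : 0 < (-z - 1).re := by
      rw [Complex.sub_re, Complex.neg_re, Complex.one_re]
      push_cast at hm
      linarith
    have hreflect : Tendsto (fun w : ℂ ↦ -w - 1) (𝓝 z) (𝓝 (-z - 1)) :=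
      (continuous_neg.sub continuous_const).tendsto z
    refine ((tendsto_normalizedGammaQuotient_neg_sub_one hs).comp
      (tendsto_id.prodMap hreflect)).congr fun p ↦ ?_
    simp
  | succ m ih =>
    have hprev := ih (z - 1) (by
      rw [Complex.sub_re, Complex.one_re]
      push_cast at hm
      linarith)
    have hshift : Tendsto (fun w : ℂ ↦ w - 1) (𝓝 z) (𝓝 (z - 1)) :=
      (continuous_sub_right 1).tendsto z
    have hinv : Tendsto (fun x : ℝ ↦ (x : ℂ)⁻¹) atTop (𝓝 0) :=
      tendsto_inv₀_cobounded.comp (RCLike.tendsto_ofReal_atTop_cobounded ℂ)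
    have hfactor : Tendsto (fun p : ℝ × ℂ ↦ 1 - p.2 / p.1) (atTop ×ˢ 𝓝 z) (𝓝 1) := by
      simpa only [mul_zero, sub_zero, div_eq_mul_inv, Function.comp_apply] using
        (tendsto_snd.mul (hinv.comp tendsto_fst)).const_sub 1
    rw [← mul_one (1 : ℂ)]
    refine ((hprev.comp (tendsto_id.prodMap hshift)).mul hfactor).congr' ?_
    filter_upwards [tendsto_fst.eventually (eventually_gt_atTop 0)] with p hx
    simpa using (normalizedGammaQuotient_add_one hx (p.2 - 1)).symm

lemma tendstoLocallyUniformlyOn_normalizedGammaQuotient :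
    TendstoLocallyUniformlyOn normalizedGammaQuotient 1 atTop univ :=
  isOpen_univ.tendstoLocallyUniformlyOn_iff_forall_tendsto.2 fun z _ ↦
    Uniform.tendsto_nhds_right.1 (tendsto_normalizedGammaQuotient z)

lemma tendsto_iteratedDeriv_normalizedGammaQuotient (k : ℕ) (z : ℂ) :
    Tendsto (fun x ↦ iteratedDeriv k (normalizedGammaQuotient x) z) atTop
      (𝓝 (if k = 0 then 1 else 0)) := by
  have hdiff : ∀ᶠ x in atTop, DifferentiableOn ℂ (normalizedGammaQuotient x) univ :=
    (eventually_gt_atTop 0).mono fun x hx ↦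
      (differentiable_normalizedGammaQuotient hx).differentiableOn
  have h := (tendstoLocallyUniformlyOn_iteratedDeriv isOpen_univ hdiff
    tendstoLocallyUniformlyOn_normalizedGammaQuotient k).tendsto_at (mem_univ z)
  simpa only [Pi.one_def, iteratedDeriv_const] using h

lemma iteratedDeriv_const_cpow {w : ℂ} (hw : w ≠ 0) (k : ℕ) (z : ℂ) :
    iteratedDeriv k (fun z ↦ w ^ z) z = Complex.log w ^ k * w ^ z := by
  simp only [Complex.cpow_def_of_ne_zero hw, iteratedDeriv_cexp_const_mul]

/-- The logarithm `l_c^{(k)}`, restricted to the real line: the `k`-th Taylor coefficient at `z = c`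
of `Γ(x) / Γ(x - z)`. -/
noncomputable def gammaLogarithm (c : ℂ) (k : ℕ) (x : ℝ) : ℂ :=
  1 / (k.factorial : ℂ) *
    iteratedDeriv k (fun z : ℂ ↦ Complex.Gamma x / Complex.Gamma (x - z)) c

lemma gammaLogarithm_div_eq_sum (c : ℂ) (k : ℕ) {x : ℝ} (hx : 1 < x) :
    gammaLogarithm c k x / ((x : ℂ) ^ c * (Real.log x : ℂ) ^ k) =
      1 / (k.factorial : ℂ) * ∑ i ∈ Finset.range (k + 1),
        (k.choose i : ℂ) * iteratedDeriv i (normalizedGammaQuotient x) c *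
          (Real.log x : ℂ)⁻¹ ^ i := by
  have hx0 : 0 < x := one_pos.trans hx
  have hx' : (x : ℂ) ≠ 0 := Complex.ofReal_ne_zero.2 hx0.ne'
  have hlog : (Real.log x : ℂ) ≠ 0 := Complex.ofReal_ne_zero.2 (Real.log_pos hx).ne'
  have hcpow : (x : ℂ) ^ c ≠ 0 := Complex.cpow_ne_zero_iff.2 (Or.inl hx')
  have hsplit : (fun z : ℂ ↦ Complex.Gamma x / Complex.Gamma (x - z)) =
      fun z ↦ normalizedGammaQuotient x z * (x : ℂ) ^ z := by
    ext z
    rw [normalizedGammaQuotient, mul_right_comm, ← Complex.cpow_add _ _ hx', neg_add_cancel,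
      Complex.cpow_zero, one_mul]
  have hdiff : Differentiable ℂ fun z : ℂ ↦ (x : ℂ) ^ z :=
    differentiable_id.const_cpow (Or.inl hx')
  rw [gammaLogarithm, hsplit, iteratedDeriv_fun_mul
    (differentiable_normalizedGammaQuotient hx0).contDiff.contDiffAt hdiff.contDiff.contDiffAt,
    mul_div_assoc, Finset.sum_div]
  congr 1
  refine Finset.sum_congr rfl fun i hi ↦ ?_
  have hik : i ≤ k := Finset.mem_range_succ_iff.1 hi
  rw [iteratedDeriv_const_cpow hx', ← Complex.ofReal_log hx0.le, ← pow_sub_mul_pow _ hik, inv_pow]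
  field_simp

lemma tendsto_gammaLogarithm_div (c : ℂ) (k : ℕ) :
    Tendsto (fun x : ℝ ↦ gammaLogarithm c k x / ((x : ℂ) ^ c * (Real.log x : ℂ) ^ k)) atTop
      (𝓝 (1 / (k.factorial : ℂ))) := by
  have hlog : Tendsto (fun x ↦ (Real.log x : ℂ)⁻¹) atTop (𝓝 0) :=
    tendsto_inv₀_cobounded.comp
      ((RCLike.tendsto_ofReal_atTop_cobounded ℂ).comp Real.tendsto_log_atTop)
  have hsum := (tendsto_finsetSum (Finset.range (k + 1)) fun i _ ↦
    ((tendsto_iteratedDeriv_normalizedGammaQuotient i c).const_mul (k.choose i : ℂ)).mul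
      (hlog.pow i)).const_mul (1 / (k.factorial : ℂ))
  rw [Finset.sum_eq_single_of_mem 0 (by simp) fun i _ hi ↦ by simp [hi]] at hsum
  simp only [Nat.choose_zero_right, Nat.cast_one, if_true, pow_zero, mul_one] at hsum
  refine hsum.congr' ?_
  filter_upwards [eventually_gt_atTop 1] with x hx
  exact (gammaLogarithm_div_eq_sum c k hx).symm

lemma isEquivalent_gammaLogarithm (c : ℂ) (k : ℕ) :
    gammaLogarithm c k ~[atTop]
      fun x : ℝ ↦ 1 / (k.factorial : ℂ) * ((x : ℂ) ^ c * (Real.log x : ℂ) ^ k) := by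
  refine isEquivalent_const_mul_of_tendsto_div
    (one_div_ne_zero (Nat.cast_ne_zero.2 k.factorial_ne_zero)) ?_ (tendsto_gammaLogarithm_div c k)
  filter_upwards [eventually_gt_atTop 1] with x hx
  exact mul_ne_zero
    (Complex.cpow_ne_zero_iff.2 (Or.inl (Complex.ofReal_ne_zero.2 (one_pos.trans hx).ne')))
    (pow_ne_zero _ (Complex.ofReal_ne_zero.2 (Real.log_pos hx).ne'))

lemma eventually_sum_ne_zero_of_isLittleO {ι κ E : Type*} [NormedAddCommGroup E] {l : Filter κ}
    {s : Finset ι} {f : ι → κ → E} {i : ι} (hi : i ∈ s) (hne : ∀ᶠ x in l, f i x ≠ 0)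
    (h : ∀ j ∈ s, j ≠ i → f j =o[l] f i) : ∀ᶠ x in l, ∑ j ∈ s, f j x ≠ 0 := by
  classical
  have hrest : (fun x ↦ ∑ j ∈ s.erase i, f j x) =o[l] f i :=
    IsLittleO.fun_sum fun j hj ↦ h j (Finset.mem_of_mem_erase hj) (Finset.ne_of_mem_erase hj)
  have hequiv : (fun x ↦ ∑ j ∈ s, f j x) ~[l] f i := by
    refine (IsEquivalent.refl.add_isLittleO hrest).congr_left (.of_forall fun x ↦ ?_)
    exact Finset.add_sum_erase s (f · x) hi
  filter_upwards [hne, hequiv.isBigO_symm.eq_zero_imp] with x hx himp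
  exact mt himp hx

lemma isLittleO_rpow_mul_log_pow {α β : ℝ} {j k : ℕ} (h : toLex (α, j) < toLex (β, k)) :
    (fun x ↦ x ^ α * Real.log x ^ j) =o[atTop] fun x ↦ x ^ β * Real.log x ^ k := by
  rcases Prod.Lex.toLex_lt_toLex.1 h with hlt | ⟨heq, hlt⟩
  · have hlog : (fun x ↦ Real.log x ^ j) =o[atTop] fun x ↦ x ^ (β - α) := by
      simpa only [Real.rpow_natCast] using isLittleO_log_rpow_rpow_atTop (j : ℝ) (sub_pos.2 hlt)
    have hone : (fun _ ↦ (1 : ℝ)) =O[atTop] fun x ↦ Real.log x ^ k := by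
      refine IsBigO.of_bound 1 ?_
      filter_upwards [Real.tendsto_log_atTop.eventually_ge_atTop 1] with x hx
      rw [norm_one, one_mul]
      exact (one_le_pow₀ hx).trans (Real.le_norm_self _)
    refine (((isBigO_refl (fun x : ℝ ↦ x ^ α) atTop).mul_isLittleO hlog).mul_isBigO hone).congr'
      (.of_forall fun x ↦ mul_one _) ?_
    filter_upwards [eventually_gt_atTop 0] with x hx
    rw [← Real.rpow_add hx, add_sub_cancel]
  · obtain rfl : α = β := heq
    exact (isBigO_refl _ _).mul_isLittleO
      ((isLittleO_pow_pow_atTop_of_lt hlt).comp_tendsto Real.tendsto_log_atTop)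

/-- A complex function of a real variable with a power-law behaviour `b * x ^ α` at `+∞`. The
coefficient `b = 0` is allowed and means that the function vanishes for large `x`. -/
def HasPowerAsymptotics (f : ℝ → ℂ) : Prop :=
  ∃ (b : ℂ) (α : ℝ), f ~[atTop] fun x ↦ b * ((x ^ α : ℝ) : ℂ)

lemma HasPowerAsymptotics.div {f g : ℝ → ℂ} (hf : HasPowerAsymptotics f)
    (hg : HasPowerAsymptotics g) : HasPowerAsymptotics fun x ↦ f x / g x := by
  obtain ⟨b, α, hb⟩ := hf
  obtain ⟨b', α', hb'⟩ := hg
  refine ⟨b / b', α - α', (IsEquivalent.div hb hb').congr_right ?_⟩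
  filter_upwards [eventually_gt_atTop 0] with x hx
  rw [Pi.div_apply, Real.rpow_sub hx, Complex.ofReal_div, div_mul_div_comm]

lemma tendsto_tsum_mul_inv_prod_add {a : ℕ → ℂ} {r : ℝ} (hr : 0 < r)
    (ha : Summable fun s ↦ a s * (∏ k ∈ Finset.range s, ((r : ℂ) + k))⁻¹) :
    Tendsto (fun x : ℝ ↦ ∑' s, a s * (∏ k ∈ Finset.range s, ((x : ℂ) + k))⁻¹) atTop
      (𝓝 (a 0)) := by
  have hinv (k : ℕ) : Tendsto (fun x : ℝ ↦ ((x : ℂ) + k)⁻¹) atTop (𝓝 0) :=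
    tendsto_inv₀_cobounded.comp ((tendsto_add_const_cobounded (k : ℂ)).comp
      (RCLike.tendsto_ofReal_atTop_cobounded ℂ))
  have hterm (s : ℕ) : Tendsto (fun x : ℝ ↦ a s * (∏ k ∈ Finset.range s, ((x : ℂ) + k))⁻¹) atTop
      (𝓝 (a s * 0 ^ s)) := by
    simpa only [Finset.prod_inv_distrib, Finset.prod_const, Finset.card_range] using
      (tendsto_finsetProd (Finset.range s) fun k _ ↦ hinv k).const_mul (a s)
  have hbound : ∀ᶠ x : ℝ in atTop, ∀ s, ‖a s * (∏ k ∈ Finset.range s, ((x : ℂ) + k))⁻¹‖ ≤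
      ‖a s * (∏ k ∈ Finset.range s, ((r : ℂ) + k))⁻¹‖ := by
    have hnorm {y : ℝ} (hy : 0 < y) (k : ℕ) : ‖(y : ℂ) + k‖ = y + k := by
      rw [← Complex.ofReal_natCast, ← Complex.ofReal_add, Complex.norm_of_nonneg (by positivity)]
    filter_upwards [eventually_ge_atTop r] with x hx s
    simp only [norm_mul, norm_inv, norm_prod, hnorm hr, hnorm (hr.trans_le hx)]
    gcongr
  have hlim := tendsto_tsum_of_dominated_convergence ha.norm hterm hbound
  rwa [tsum_eq_single 0 fun s hs ↦ by simp [hs], pow_zero, mul_one] at hlim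

lemma isEquivalent_prod_add (m : ℕ) :
    (fun x : ℝ ↦ ∏ k ∈ Finset.range m, ((x : ℂ) + k)) ~[atTop] fun x : ℝ ↦ (x : ℂ) ^ m := by
  have hfactor (k : ℕ) : (fun x : ℝ ↦ (x : ℂ) + k) ~[atTop] fun x : ℝ ↦ (x : ℂ) := by
    refine IsEquivalent.refl.add_isLittleO (isLittleO_const_left.2 (Or.inr ?_))
    exact tendsto_norm_cobounded_atTop.comp (RCLike.tendsto_ofReal_atTop_cobounded ℂ)
  simpa only [Finset.prod_const, Finset.card_range] using
    IsEquivalent.finsetProd (s := Finset.range m) fun k _ ↦ hfactor k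

lemma hasSum_factorialSeries_mul_prod {a : ℕ → ℂ} {x : ℝ} {y : ℂ} (hx : 0 < x)
    (h : HasSum (fun s ↦ a s * (∏ k ∈ Finset.range s, ((x : ℂ) + k))⁻¹) y) {m : ℕ}
    (hm : ∀ s < m, a s = 0) :
    HasSum (fun j ↦ a (j + m) * (∏ k ∈ Finset.range j, (((x + m : ℝ) : ℂ) + k))⁻¹)
      (y * ∏ k ∈ Finset.range m, ((x : ℂ) + k)) := by
  have hprod : ∏ k ∈ Finset.range m, ((x : ℂ) + k) ≠ 0 :=
    Finset.prod_ne_zero_iff.2 fun k _ ↦ by exact_mod_cast (by positivity : x + k ≠ 0)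
  have hhead : ∑ s ∈ Finset.range m, a s * (∏ k ∈ Finset.range s, ((x : ℂ) + k))⁻¹ = 0 :=
    Finset.sum_eq_zero fun s hs ↦ by rw [hm s (Finset.mem_range.1 hs), zero_mul]
  have htail := (hasSum_nat_add_iff' m).2 h
  rw [hhead, sub_zero] at htail
  refine (htail.mul_right (∏ k ∈ Finset.range m, ((x : ℂ) + k))).congr_fun fun j ↦ ?_
  rw [add_comm j m, Finset.prod_range_add]
  push_cast
  simp only [← add_assoc]
  field_simp

lemma tendsto_factorialSeries_mul_prod {a : ℕ → ℂ} {f : ℝ → ℂ} {R : ℝ}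
    (h : ∀ x : ℝ, R < x → HasSum (fun s ↦ a s * (∏ k ∈ Finset.range s, ((x : ℂ) + k))⁻¹) (f x))
    {m : ℕ} (hm : ∀ s < m, a s = 0) :
    Tendsto (fun x ↦ f x * ∏ k ∈ Finset.range m, ((x : ℂ) + k)) atTop (𝓝 (a m)) := by
  obtain ⟨r, hrR, hr⟩ : ∃ r, R < r ∧ 0 < r :=
    ((eventually_gt_atTop R).and (eventually_gt_atTop 0)).exists
  have hlim := (tendsto_tsum_mul_inv_prod_add (a := fun j ↦ a (j + m)) (r := r + m) (by positivity)
    (hasSum_factorialSeries_mul_prod hr (h r hrR) hm).summable).comp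
      (tendsto_atTop_add_const_right atTop (m : ℝ) tendsto_id)
  rw [zero_add] at hlim
  refine hlim.congr' ?_
  filter_upwards [eventually_gt_atTop R, eventually_gt_atTop 0] with x hxR hx
  exact (hasSum_factorialSeries_mul_prod hx (h x hxR) hm).tsum_eq

lemma IsFactorialSeries.hasPowerAsymptotics {f : ℂ → ℂ} (hf : IsFactorialSeries f) :
    HasPowerAsymptotics fun x ↦ f x := by
  obtain ⟨a, R, h⟩ := hf
  have hreal (x : ℝ) (hx : R < x) :
      HasSum (fun s ↦ a s * (∏ k ∈ Finset.range s, ((x : ℂ) + k))⁻¹) (f x) :=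
    h x (by rwa [Complex.ofReal_re])
  by_cases ha : ∃ m, a m ≠ 0
  · have hlim := tendsto_factorialSeries_mul_prod hreal fun s hs ↦
      not_not.1 (Nat.find_min ha hs)
    have hequiv := ((isEquivalent_const_iff_tendsto (Nat.find_spec ha)).2 hlim).div
      (isEquivalent_prod_add (Nat.find ha))
    refine ⟨a (Nat.find ha), -(Nat.find ha : ℝ), (hequiv.congr_left ?_).congr_right ?_⟩
    · filter_upwards [eventually_gt_atTop 0] with x hx
      refine mul_div_cancel_right₀ _ (Finset.prod_ne_zero_iff.2 fun k _ ↦ ?_)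
      exact_mod_cast (by positivity : x + k ≠ 0)
    · filter_upwards [eventually_gt_atTop 0] with x hx
      simp [Real.rpow_neg hx.le, div_eq_mul_inv]
  · push Not at ha
    refine ⟨0, 0, EventuallyEq.isEquivalent ?_⟩
    filter_upwards [eventually_gt_atTop R] with x hx
    have hzero := hreal x hx
    simp only [ha, zero_mul] at hzero
    rw [zero_mul, hzero.unique hasSum_zero]

lemma IsFactorialQuotient.hasPowerAsymptotics {f : ℂ → ℂ} (hf : IsFactorialQuotient f) :
    HasPowerAsymptotics fun x ↦ f x := by
  obtain ⟨u, v, hu, hv, R, h⟩ := hf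
  obtain ⟨b, α, hb⟩ := hu.hasPowerAsymptotics.div hv.hasPowerAsymptotics
  refine ⟨b, α, hb.congr_left ?_⟩
  filter_upwards [eventually_gt_atTop R] with x hx
  exact (h x hx).2.symm

lemma isEquivalent_mul_gammaLogarithm {a : ℝ → ℂ} {b : ℂ} {α : ℝ}
    (ha : a ~[atTop] fun x ↦ b * ((x ^ α : ℝ) : ℂ)) (c : ℂ) (k : ℕ) :
    (fun x ↦ a x * gammaLogarithm c k x) ~[atTop] fun x : ℝ ↦
      b / k.factorial * ((x : ℂ) ^ c * ((x ^ α * Real.log x ^ k : ℝ) : ℂ)) := by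
  refine (ha.mul (isEquivalent_gammaLogarithm c k)).congr_right (.of_forall fun x ↦ ?_)
  simp only [Pi.mul_apply]
  push_cast
  ring

lemma eventually_mul_gammaLogarithm_ne_zero {a : ℝ → ℂ} {b : ℂ} {α : ℝ} (hb : b ≠ 0)
    (ha : a ~[atTop] fun x ↦ b * ((x ^ α : ℝ) : ℂ)) (c : ℂ) (k : ℕ) :
    ∀ᶠ x in atTop, a x * gammaLogarithm c k x ≠ 0 := by
  have himp := (isEquivalent_mul_gammaLogarithm ha c k).isBigO_symm.eq_zero_imp
  filter_upwards [himp, eventually_gt_atTop 1] with x himp hx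
  have hx0 : 0 < x := one_pos.trans hx
  refine mt himp (mul_ne_zero (div_ne_zero hb (Nat.cast_ne_zero.2 k.factorial_ne_zero))
    (mul_ne_zero (Complex.cpow_ne_zero_iff.2 (Or.inl (Complex.ofReal_ne_zero.2 hx0.ne')))
      (Complex.ofReal_ne_zero.2 ?_)))
  exact mul_ne_zero (Real.rpow_pos_of_pos hx0 α).ne' (pow_ne_zero k (Real.log_pos hx).ne')

lemma isLittleO_mul_gammaLogarithm {a a' : ℝ → ℂ} {b b' : ℂ} {α α' : ℝ} {k k' : ℕ}
    (ha : a ~[atTop] fun x ↦ b * ((x ^ α : ℝ) : ℂ))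
    (ha' : a' ~[atTop] fun x ↦ b' * ((x ^ α' : ℝ) : ℂ)) (hb' : b' ≠ 0)
    (h : toLex (α, k) < toLex (α', k')) (c : ℂ) :
    (fun x ↦ a x * gammaLogarithm c k x) =o[atTop] fun x ↦ a' x * gammaLogarithm c k' x := by
  have hscale := Complex.isLittleO_ofReal_left.2 (Complex.isLittleO_ofReal_right.2
    (isLittleO_rpow_mul_log_pow h))
  have hpow := (isBigO_refl (fun x : ℝ ↦ (x : ℂ) ^ c) atTop).mul_isLittleO hscale
  have hcoeff : b' / (k'.factorial : ℂ) ≠ 0 :=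
    div_ne_zero hb' (Nat.cast_ne_zero.2 k'.factorial_ne_zero)
  exact (isEquivalent_mul_gammaLogarithm ha c k).trans_isLittleO
    (((hpow.const_mul_left _).const_mul_right hcoeff).trans_isEquivalent
      (isEquivalent_mul_gammaLogarithm ha' c k').symm)

theorem logarithms_linearIndependent_over_factorial_quotients_general
    (c : ℂ) (s : Finset ℕ) (a : ℕ → ℝ → ℂ) (ha : ∀ k ∈ s, HasPowerAsymptotics (a k))
    (hrel : ∃ᶠ x in atTop, ∑ k ∈ s, a k x * gammaLogarithm c k x = 0) :
    ∀ k ∈ s, ∀ᶠ x in atTop, a k x = 0 := by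
  choose! b α hbα using ha
  have hvanish : ∀ k ∈ s, b k = 0 → ∀ᶠ x in atTop, a k x = 0 := fun k hk hb ↦
    isEquivalent_zero_iff_eventually_zero.1
      ((hbα k hk).congr_right (.of_forall fun x ↦ by simp [hb]))
  intro j hj
  by_contra hj0
  obtain ⟨m, hm, hmax⟩ := Finset.exists_max_image {k ∈ s | b k ≠ 0} (fun k ↦ toLex (α k, k))
    ⟨j, Finset.mem_filter.2 ⟨hj, fun hb ↦ hj0 (hvanish j hj hb)⟩⟩
  obtain ⟨hms, hbm⟩ := Finset.mem_filter.1 hm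
  refine hrel (eventually_sum_ne_zero_of_isLittleO hms
    (eventually_mul_gammaLogarithm_ne_zero hbm (hbα m hms) c m) fun k hk hkm ↦ ?_)
  by_cases hbk : b k = 0
  · refine (isLittleO_zero _ _).congr' ?_ EventuallyEq.rfl
    filter_upwards [hvanish k hk hbk] with x hx
    rw [hx, zero_mul]
  · refine isLittleO_mul_gammaLogarithm (hbα k hk) (hbα m hms) hbm
      ((hmax k (Finset.mem_filter.2 ⟨hk, hbk⟩)).lt_of_ne ?_) c
    exact fun heq ↦ hkm (congrArg (fun p ↦ (ofLex p).2) heq)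

/-- Linear independence of the logarithms `l_c^{(k)}` over quotients of
convergent factorial series: any relation `Σ a_k l_c^{(k)} = 0` (for large real
`x`) with `a_k` quotients of convergent factorial series forces all `a_k = 0`. -/
theorem logarithms_linearIndependent_over_factorial_quotients
    (c : ℂ) (n : ℕ) (a : ℕ → ℂ → ℂ)
    (ha : ∀ k : ℕ, k ≤ n → IsFactorialQuotient (a k))
    (hrel : ∃ R : ℝ, ∀ x : ℝ, R < x →
      ∑ k ∈ Finset.range (n + 1),
        a k x *
          ((1 / (k.factorial : ℂ)) *
            iteratedDeriv k (fun c' : ℂ => Complex.Gamma x / Complex.Gamma (x - c')) c) = 0) :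
    ∀ k : ℕ, k ≤ n → ∃ R : ℝ, ∀ x : ℝ, R < x → a k x = 0 := by
  obtain ⟨R, hR⟩ := hrel
  intro k hk
  have hzero := logarithms_linearIndependent_over_factorial_quotients_general c
    (Finset.range (n + 1)) (fun k x ↦ a k x)
    (fun k hk ↦ (ha k (Finset.mem_range_succ_iff.1 hk)).hasPowerAsymptotics)
    ((eventually_gt_atTop R).mono hR).frequently k (Finset.mem_range_succ_iff.2 hk)
  simpa using atTop_basis_Ioi.eventually_iff.1 hzero
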